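/- Let M be a compact metric space, μ a finite Borel measure on M, and B = (ℕ → M) with the product topology. For continuous ψ, β, φ : B → ℝ, one has the second-order Taylor estimate in the supremum norm: ‖L_{ψ+β}φ − L_ψ(φ·(1 + β + β²/2))‖_∞ ≤ μ(M) · e^{‖ψ‖_∞} · (e^{‖β‖_∞} − 1 − ‖β‖_∞ − ‖β‖_∞²/2) · ‖φ‖_∞. -/

import Mathlib

open MeasureTheory

/-- The sequence `ax = (a, x 0, x 1, …)`. -/
def seqCons {M : Type*} (a : M) (x : ℕ → M) : ℕ → M
  | 0 => a
  | n + 1 => x n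

/-!
Since `e^{ψ+β}φ - e^ψ φ P(β) = (e^β - P(β)) e^ψ φ` for every polynomial `P`, the error of replacing
`e^β` by its Taylor polynomial is at most `L_ψ|φ|` times the Taylor remainder of the exponential at
`‖β‖`: the remainder is a power series with nonnegative coefficients, so at a real number it is
dominated by its value at any bound for the absolute value. Finally `L_ψ|φ| ≤ μ(M) e^{‖ψ‖} ‖φ‖`.
-/

open scoped BoundedContinuousFunction

section ExpRemainder

theorem hasSum_exp_sub_sum_range (n : ℕ) (t : ℝ) :
    HasSum (fun k ↦ t ^ (k + n) / (k + n).factorial)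
      (Real.exp t - ∑ k ∈ Finset.range n, t ^ k / k.factorial) := by
  rw [hasSum_nat_add_iff' (f := fun k : ℕ ↦ t ^ k / k.factorial), Real.exp_eq_exp_ℝ]
  exact NormedSpace.expSeries_div_hasSum_exp t

theorem abs_exp_sub_sum_range_le {t b : ℝ} (h : |t| ≤ b) (n : ℕ) :
    |Real.exp t - ∑ k ∈ Finset.range n, t ^ k / k.factorial| ≤
      Real.exp b - ∑ k ∈ Finset.range n, b ^ k / k.factorial := by
  refine (hasSum_exp_sub_sum_range n t).norm_le_of_bounded (hasSum_exp_sub_sum_range n b) fun k ↦ ?_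
  rw [norm_div, norm_pow, Real.norm_eq_abs, Real.norm_natCast]
  gcongr

end ExpRemainder

section Integral

variable {α E : Type*} [MeasurableSpace α] {μ : Measure α} [NormedAddCommGroup E] [NormedSpace ℝ E]
  {f : α → ℝ} {g : α → E} {b : ℝ}

theorem integrable_comp_smul_of_abs_le {F : ℝ → ℝ} (hF : Continuous F)
    (hf : AEStronglyMeasurable f μ) (hfb : ∀ᵐ a ∂μ, |f a| ≤ b) (hg : Integrable g μ) :
    Integrable (fun a ↦ F (f a) • g a) μ := by
  obtain ⟨C, hC⟩ := (isCompact_Icc (a := -b) (b := b)).exists_bound_of_continuousOn hF.continuousOn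
  refine hg.bdd_smul C (hF.comp_aestronglyMeasurable hf) ?_
  filter_upwards [hfb] with a ha using hC _ (abs_le.mp ha)

theorem norm_integral_exp_smul_sub_le (hf : AEStronglyMeasurable f μ)
    (hfb : ∀ᵐ a ∂μ, |f a| ≤ b) (hg : Integrable g μ) (n : ℕ) :
    ‖(∫ a, Real.exp (f a) • g a ∂μ) - ∫ a, (∑ k ∈ Finset.range n, f a ^ k / k.factorial) • g a ∂μ‖ ≤
      (Real.exp b - ∑ k ∈ Finset.range n, b ^ k / k.factorial) * ∫ a, ‖g a‖ ∂μ := by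
  have h_exp := integrable_comp_smul_of_abs_le Real.continuous_exp hf hfb hg
  have h_poly := integrable_comp_smul_of_abs_le
    (F := fun t ↦ ∑ k ∈ Finset.range n, t ^ k / k.factorial) (by fun_prop) hf hfb hg
  rw [← integral_sub h_exp h_poly, ← integral_const_mul]
  refine norm_integral_le_of_norm_le (hg.norm.const_mul _) ?_
  filter_upwards [hfb] with a ha
  rw [← sub_smul, norm_smul]
  gcongr
  exact abs_exp_sub_sum_range_le ha n

end Integral

section RuelleOperator

/-- The Ruelle operator `L_ψ` with a priori measure `μ`, evaluated at `φ` and `x`. It is defined on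
arbitrary functions, with value `0` where the integrand is not integrable. -/
noncomputable def ruelleOperator {M : Type*} [MeasurableSpace M] (μ : Measure M)
    (ψ φ : (ℕ → M) → ℝ) (x : ℕ → M) : ℝ :=
  ∫ a, Real.exp (ψ (seqCons a x)) * φ (seqCons a x) ∂μ

theorem abs_exp_mul_le {X : Type*} [TopologicalSpace X] (ψ φ : X →ᵇ ℝ) (y : X) :
    |Real.exp (ψ y) * φ y| ≤ Real.exp ‖ψ‖ * ‖φ‖ := by
  rw [abs_mul, Real.abs_exp]
  gcongr
  · exact ψ.apply_le_norm y
  · exact φ.norm_coe_le_norm y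

variable {M : Type*} [TopologicalSpace M]

@[fun_prop]
theorem continuous_seqCons (x : ℕ → M) : Continuous fun a ↦ seqCons a x :=
  continuous_pi fun
    | 0 => continuous_id
    | _ + 1 => continuous_const

variable [MeasurableSpace M] (μ : Measure M) [IsFiniteMeasure μ]

theorem abs_ruelleOperator_le (ψ φ : (ℕ → M) →ᵇ ℝ) (x : ℕ → M) :
    |ruelleOperator μ ψ φ x| ≤ Real.exp ‖ψ‖ * ‖φ‖ * μ.real Set.univ :=
  norm_integral_le_of_norm_le_const (f := fun a ↦ Real.exp (ψ (seqCons a x)) * φ (seqCons a x))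
    (.of_forall fun a ↦ abs_exp_mul_le ψ φ (seqCons a x))

variable [OpensMeasurableSpace M]

theorem integrable_ruelleOperator_integrand (ψ φ : (ℕ → M) →ᵇ ℝ) (x : ℕ → M) :
    Integrable (fun a ↦ Real.exp (ψ (seqCons a x)) * φ (seqCons a x)) μ :=
  .of_bound (by fun_prop : Continuous _).aestronglyMeasurable _
    (.of_forall fun a ↦ abs_exp_mul_le ψ φ (seqCons a x))

theorem abs_ruelleOperator_add_sub_le (ψ β φ : (ℕ → M) →ᵇ ℝ) (n : ℕ) (x : ℕ → M) :
    |ruelleOperator μ (ψ + β) φ x -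
        ruelleOperator μ ψ (fun y ↦ φ y * ∑ k ∈ Finset.range n, β y ^ k / k.factorial) x| ≤
      (Real.exp ‖β‖ - ∑ k ∈ Finset.range n, ‖β‖ ^ k / k.factorial) * ruelleOperator μ ψ |φ| x := by
  simpa [ruelleOperator, Real.exp_add, mul_assoc, mul_comm, mul_left_comm] using
    norm_integral_exp_smul_sub_le
      (by fun_prop : Continuous fun a ↦ β (seqCons a x)).aestronglyMeasurable
      (.of_forall fun a ↦ β.norm_coe_le_norm (seqCons a x))
      (integrable_ruelleOperator_integrand μ ψ φ x) n

theorem ruelle_operator_second_order_taylor_general (ψ β φ : (ℕ → M) →ᵇ ℝ) (n : ℕ) (x : ℕ → M) :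
    |ruelleOperator μ (ψ + β) φ x -
        ruelleOperator μ ψ (fun y ↦ φ y * ∑ k ∈ Finset.range n, β y ^ k / k.factorial) x| ≤
      μ.real Set.univ * Real.exp ‖ψ‖ *
        (Real.exp ‖β‖ - ∑ k ∈ Finset.range n, ‖β‖ ^ k / k.factorial) * ‖φ‖ := by
  have h_remainder : 0 ≤ Real.exp ‖β‖ - ∑ k ∈ Finset.range n, ‖β‖ ^ k / k.factorial :=
    sub_nonneg.mpr (Real.sum_le_exp_of_nonneg (norm_nonneg β) n)
  have h_sup : ruelleOperator μ ψ |φ| x ≤ Real.exp ‖ψ‖ * ‖φ‖ * μ.real Set.univ := by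
    simpa [norm_abs_eq_norm] using (le_abs_self _).trans (abs_ruelleOperator_le μ ψ |φ| x)
  calc
    _ ≤ (Real.exp ‖β‖ - ∑ k ∈ Finset.range n, ‖β‖ ^ k / k.factorial) * ruelleOperator μ ψ |φ| x :=
      abs_ruelleOperator_add_sub_le μ ψ β φ n x
    _ ≤ (Real.exp ‖β‖ - ∑ k ∈ Finset.range n, ‖β‖ ^ k / k.factorial) *
          (Real.exp ‖ψ‖ * ‖φ‖ * μ.real Set.univ) := by gcongr
    _ = _ := by ring

end RuelleOperator

/-- Second-order Taylor estimate for the Ruelle operator in the sup norm: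
`‖L_{ψ+β}φ − L_ψ(φ·(1+β+β²/2))‖_∞ ≤ μ(M) e^{‖ψ‖_∞} (e^{‖β‖_∞} − 1 − ‖β‖_∞ − ‖β‖_∞²/2) ‖φ‖_∞`. -/
theorem ruelle_operator_second_order_taylor
    {M : Type*} [MetricSpace M] [CompactSpace M] [MeasurableSpace M] [BorelSpace M]
    (μ : Measure M) [IsFiniteMeasure μ]
    (ψ β φ : C(ℕ → M, ℝ)) :
    ∀ x : ℕ → M,
      |(∫ a, Real.exp (ψ (seqCons a x) + β (seqCons a x)) * φ (seqCons a x) ∂μ) -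
        (∫ a, Real.exp (ψ (seqCons a x)) * φ (seqCons a x) *
          (1 + β (seqCons a x) + β (seqCons a x) ^ 2 / 2) ∂μ)| ≤
      (μ Set.univ).toReal * Real.exp ‖ψ‖ *
        (Real.exp ‖β‖ - 1 - ‖β‖ - ‖β‖ ^ 2 / 2) * ‖φ‖ := by
  intro x
  simpa [ruelleOperator, Finset.sum_range_succ, Nat.factorial, mul_assoc, sub_sub, add_assoc,
    measureReal_def] using
    ruelle_operator_second_order_taylor_general μ (.mkOfCompact ψ) (.mkOfCompact β)
      (.mkOfCompact φ) 3 x
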